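/- arXiv:2202.13800 — 2 statements merged into one kernel-verified Lean document; each statement's English description precedes it below -/
import Mathlib

section
/- Let G be a finite connected simple graph on at least 2 vertices with adjacency matrix A and degree matrix D (so every degree is positive), and let L = I − D^{-1/2} A D^{-1/2} be its symmetric normalized Laplacian. Then 2 is an eigenvalue of L if and only if G is bipartite. -/
/-!
Substituting `v = D^{1/2} f`, the equation `L v = 2 v` says that the signless Laplacian `D + A`
kills `f`, i.e. `∑_{j ~ i} (f i + f j) = 0` for every vertex `i`
(`two_mem_spectrum_iff_exists_signless`).
Pairing this with `f` gives the quadratic form identity `∑_{i ~ j} (f i + f j)² = 0`, so `f`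
changes sign along every edge (`signless_kernel_neg_of_adj`). If `f ≠ 0`, connectedness makes `f`
vanish nowhere, and the sign of `f` is a proper 2-colouring. Conversely, the `±1` indicator of a
2-colouring is a nonzero element of the kernel of `D + A`.
-/

open Matrix

/-- The eigenvectors `v` of the normalized Laplacian for the eigenvalue `2` correspond to the kernel
vectors `f` of the signless Laplacian through `f = D^{-1/2} v`; positivity of the degrees makes
`D^{1/2}` invertible. -/
lemma two_mem_spectrum_iff_exists_signless {V : Type*} [Fintype V] [DecidableEq V]
    (G : SimpleGraph V) [DecidableRel G.Adj] (hdeg : ∀ i, 0 < G.degree i) :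
    (2 : ℝ) ∈ spectrum ℝ (1 - Matrix.diagonal (fun i => 1 / Real.sqrt (G.degree i)) *
        G.adjMatrix ℝ * Matrix.diagonal (fun i => 1 / Real.sqrt (G.degree i))) ↔
      ∃ f : V → ℝ, f ≠ 0 ∧ ∀ i, ∑ j ∈ G.neighborFinset i, (f i + f j) = 0 := by
  have hpos : ∀ i, 0 < Real.sqrt (G.degree i) := fun i =>
    Real.sqrt_pos.2 (by exact_mod_cast hdeg i)
  have hsq : ∀ i, Real.sqrt (G.degree i) * Real.sqrt (G.degree i) = G.degree i := fun i =>
    Real.mul_self_sqrt (Nat.cast_nonneg _)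
  have key : ∀ v : V → ℝ, ∀ i,
      ((algebraMap ℝ (Matrix V V ℝ) 2 -
        (1 - Matrix.diagonal (fun i => 1 / Real.sqrt (G.degree i)) *
        G.adjMatrix ℝ * Matrix.diagonal (fun i => 1 / Real.sqrt (G.degree i)))) *ᵥ v) i =
      v i + 1 / Real.sqrt (G.degree i) *
        ∑ j ∈ G.neighborFinset i, 1 / Real.sqrt (G.degree j) * v j := by
    intro v i
    have h2 : algebraMap ℝ (Matrix V V ℝ) 2 = 1 + 1 := by
      rw [map_ofNat, one_add_one_eq_two]
    rw [h2, add_sub_assoc, sub_sub_cancel, add_mulVec, one_mulVec, Pi.add_apply,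
      ← mulVec_mulVec, ← mulVec_mulVec, mulVec_diagonal, SimpleGraph.adjMatrix_mulVec_apply]
    simp only [mulVec_diagonal]
  rw [spectrum.mem_iff, Matrix.isUnit_iff_isUnit_det, isUnit_iff_ne_zero, not_not,
    ← Matrix.exists_mulVec_eq_zero_iff]
  constructor
  · rintro ⟨v, hv, h⟩
    refine ⟨fun i => 1 / Real.sqrt (G.degree i) * v i, ?_, fun i => ?_⟩
    · contrapose! hv
      ext i
      have := congrFun hv i
      have hi := (hpos i).ne'
      simpa [hi] using this
    · have hi := congrFun h i
      rw [key, Pi.zero_apply] at hi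
      rw [Finset.sum_add_distrib, Finset.sum_const, SimpleGraph.card_neighborFinset_eq_degree,
        nsmul_eq_mul, ← hsq i]
      have hp := (hpos i).ne'
      field_simp at hi ⊢
      linarith
  · rintro ⟨f, hf, h⟩
    refine ⟨fun i => Real.sqrt (G.degree i) * f i, ?_, ?_⟩
    · contrapose! hf
      ext i
      have := congrFun hf i
      have hi := (hpos i).ne'
      simpa [hi] using this
    · ext i
      have hi := h i
      rw [Finset.sum_add_distrib, Finset.sum_const, SimpleGraph.card_neighborFinset_eq_degree,
        nsmul_eq_mul, ← hsq i] at hi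
      have hs : ∀ j, 1 / Real.sqrt (G.degree j) * (Real.sqrt (G.degree j) * f j) = f j := by
        intro j
        have := (hpos j).ne'
        field_simp
      rw [key, Pi.zero_apply]
      simp only [hs]
      have hp := (hpos i).ne'
      field_simp
      linarith

/-- A kernel vector of the signless Laplacian changes sign along every edge, because
`∑_{i ~ j} (f i + f j)²`, summed over ordered adjacent pairs, is twice the pairing of `f` with
`(D + A) f`. -/
lemma signless_kernel_neg_of_adj {V : Type*} [Fintype V]
    (G : SimpleGraph V) [DecidableRel G.Adj] (f : V → ℝ)
    (h : ∀ i, ∑ j ∈ G.neighborFinset i, (f i + f j) = 0) {i j : V} (hij : G.Adj i j) :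
    f j = -f i := by
  have h' : ∀ i, ∑ j, (if G.Adj i j then f i + f j else 0) = 0 := fun i => by
    rw [← Finset.sum_filter, ← SimpleGraph.neighborFinset_eq_filter, h i]
  have h1 : ∑ i, ∑ j, f i * (if G.Adj i j then f i + f j else 0) = 0 := by
    simp only [← Finset.mul_sum, h', mul_zero, Finset.sum_const_zero]
  have h2 : ∑ i, ∑ j, f j * (if G.Adj i j then f i + f j else 0) = 0 := by
    rw [Finset.sum_comm]
    refine Eq.trans ?_ h1
    refine Finset.sum_congr rfl fun i _ => Finset.sum_congr rfl fun j _ => ?_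
    rw [add_comm (f j)]
    simp only [G.adj_comm j i]
  have h3 : ∑ i, ∑ j, (if G.Adj i j then (f i + f j) ^ 2 else 0) = 0 := by
    refine Eq.trans ?_ ((congrArg₂ (· + ·) h1 h2).trans (add_zero 0))
    simp only [← Finset.sum_add_distrib]
    refine Finset.sum_congr rfl fun i _ => Finset.sum_congr rfl fun j _ => ?_
    split_ifs <;> ring
  have hnn : ∀ i j, 0 ≤ (if G.Adj i j then (f i + f j) ^ 2 else 0) := fun i j => by
    split_ifs <;> positivity
  have h4 := (Finset.sum_eq_zero_iff_of_nonneg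
    (fun i _ => Finset.sum_nonneg fun j _ => hnn i j)).1 h3 i (Finset.mem_univ i)
  have h5 := (Finset.sum_eq_zero_iff_of_nonneg (fun j _ => hnn i j)).1 h4 j (Finset.mem_univ j)
  rw [if_pos hij] at h5
  have := pow_eq_zero_iff (two_ne_zero) |>.1 h5
  linarith

/-- For a finite connected simple graph on `n ≥ 2` vertices with adjacency
matrix `A` and degree matrix `D`, the value `2` is an eigenvalue of the
symmetric normalized Laplacian `L = I - D^{-1/2} A D^{-1/2}` if and only if
the graph is bipartite (i.e. 2-colorable). -/
theorem two_eigenvalue_iff_bipartite {n : ℕ} (hn : 2 ≤ n)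
    (G : SimpleGraph (Fin n)) [DecidableRel G.Adj] (hconn : G.Connected)
    (L : Matrix (Fin n) (Fin n) ℝ)
    (hL : L = 1 - Matrix.diagonal (fun i => 1 / Real.sqrt (G.degree i)) *
        G.adjMatrix ℝ *
        Matrix.diagonal (fun i => 1 / Real.sqrt (G.degree i))) :
    (2 : ℝ) ∈ spectrum ℝ L ↔ G.Colorable 2 := by
  have : Nontrivial (Fin n) := Fin.nontrivial_iff_two_le.2 hn
  have hdeg : ∀ i, 0 < G.degree i := fun i => hconn.preconnected.degree_pos_of_nontrivial i
  rw [hL, two_mem_spectrum_iff_exists_signless G hdeg]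
  constructor
  · rintro ⟨f, hf, h⟩
    have hneg : ∀ {i j}, G.Adj i j → f j = -f i := signless_kernel_neg_of_adj G f h
    obtain ⟨i₀, hi₀⟩ := Function.ne_iff.1 hf
    have hne : ∀ i, f i ≠ 0 := by
      intro i
      obtain ⟨w⟩ := hconn.preconnected i i₀
      induction w with
      | nil => exact hi₀
      | cons hadj _ ih =>
        intro h0
        exact ih hi₀ (by rw [hneg hadj, h0, neg_zero])
    classical
    let c : G.Coloring Bool := SimpleGraph.Coloring.mk (fun i => decide (0 < f i)) (by
      intro i j hadj heq
      have hj := hneg hadj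
      rw [decide_eq_decide, hj, neg_pos] at heq
      rcases lt_or_gt_of_ne (hne i) with hi | hi
      · exact lt_asymm hi (heq.2 hi)
      · exact lt_asymm hi (heq.1 hi))
    simpa using c.colorable
  · rintro ⟨c⟩
    refine ⟨fun i => if c i = 0 then 1 else -1, ?_, fun i => ?_⟩
    · refine Function.ne_iff.2 ⟨⟨0, by omega⟩, ?_⟩
      simp only [Pi.zero_apply]
      split_ifs <;> norm_num
    · refine Finset.sum_eq_zero fun j hj => ?_
      have hc := c.valid ((G.mem_neighborFinset i j).1 hj)
      by_cases hi : c i = 0 <;> by_cases hj : c j = 0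
      · exact absurd (hi.trans hj.symm) hc
      · simp [hi, hj]
      · simp [hi, hj]
      · exact absurd (by omega) hc
end

section
/- Let f : ℝⁿ → ℝ be convex and differentiable with L_f-Lipschitz gradient (L_f > 0), let P : ℝⁿ → ℝ be convex, and set F = P + f. Let X* be a minimizer of F. Define the proximal gradient iteration: given X_k, let X_{k+1} be a minimizer over X of P(X) + (L_f/2)‖X − (X_k − (1/L_f)∇f(X_k))‖². Then for every k ≥ 1, F(X_k) − F(X*) ≤ L_f‖X₀ − X*‖² / (2k); i.e., the proximal gradient method converges at rate O(1/k). -/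
/-!
Let `x⁺` be the proximal step from `x`. Three inequalities combine:

* the descent lemma bounds `f x⁺` above by its linearization at `x` plus `(L/2)‖x⁺ - x‖²`;
* convexity bounds `f z` below by its linearization at `x`;
* the prox objective is `L`-strongly convex, so its value at `z` exceeds its minimum by at least
  `(L/2)‖z - x⁺‖²`.

Since `G = x - L⁻¹ ∇f x`, expanding the squares around `G` makes the gradient terms cancel, leaving
`F x⁺ + (L/2)‖z - x⁺‖² ≤ F z + (L/2)‖z - x‖²` for every `z` (`prox_grad_step`). Taking `z = x` gives
monotonicity of `F` along the iterates; taking `z = X*` gives a telescoping sum. Together they show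
by induction that `k (F X_k - F X*) + (L/2)‖X_k - X*‖²` never exceeds its value at `k = 0`.
-/

section ProximalGradient

variable {E : Type*} [NormedAddCommGroup E] [InnerProductSpace ℝ E]

theorem hasDerivAt_along_line [CompleteSpace E] {f : E → ℝ} {f' : E → E}
    (hf : ∀ x, HasGradientAt f (f' x) x) (x d : E) (t : ℝ) :
    HasDerivAt (fun s : ℝ => f (x + s • d)) (inner ℝ (f' (x + t • d)) d) t := by
  have h1 : HasDerivAt (fun s : ℝ => x + s • d) d t := by
    simpa using ((hasDerivAt_id t).smul_const d).const_add x
  have h := (hf (x + t • d)).hasFDerivAt.comp_hasDerivAt t h1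
  rw [InnerProductSpace.toDual_apply_apply] at h
  exact h

theorem convex_gradient_ineq [CompleteSpace E] {f : E → ℝ} {f' : E → E}
    (hf : ∀ x, HasGradientAt f (f' x) x) (hc : ConvexOn ℝ Set.univ f) (x y : E) :
    f x + inner ℝ (f' x) (y - x) ≤ f y := by
  have hφ : ConvexOn ℝ Set.univ (fun s : ℝ => f (x + s • (y - x))) := by
    have h := hc.comp_affineMap (AffineMap.lineMap (k := ℝ) x y)
    have he : f ∘ (AffineMap.lineMap (k := ℝ) x y) = fun s : ℝ => f (x + s • (y - x)) := by
      funext s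
      simp [AffineMap.lineMap_apply, add_comm]
    rwa [he, Set.preimage_univ] at h
  have hd := hasDerivAt_along_line hf x (y - x) 0
  have h := hφ.le_slope_of_hasDerivAt (Set.mem_univ 0) (Set.mem_univ 1) one_pos hd
  simp [slope_def_field] at h
  linarith

/-- The descent lemma: an `L`-Lipschitz gradient gives a quadratic upper model. -/
theorem descent_ineq [CompleteSpace E] {f : E → ℝ} {f' : E → E} {L : ℝ}
    (hf : ∀ x, HasGradientAt f (f' x) x) (hl : ∀ x y, ‖f' x - f' y‖ ≤ L * ‖x - y‖) (x y : E) :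
    f y ≤ f x + inner ℝ (f' x) (y - x) + L / 2 * ‖y - x‖ ^ 2 := by
  set d := y - x with hd
  -- `φ t` is `f x` plus the gap between `f` and its quadratic model, and is nonincreasing in `t ≥ 0`
  let φ : ℝ → ℝ := fun t => f (x + t • d) - t * inner ℝ (f' x) d - L / 2 * ‖d‖ ^ 2 * t ^ 2
  have hφ : ∀ t, HasDerivAt φ
      (inner ℝ (f' (x + t • d)) d - inner ℝ (f' x) d - L * ‖d‖ ^ 2 * t) t := by
    intro t
    have h1 := ((hasDerivAt_along_line hf x d t).sub
      ((hasDerivAt_id t).mul_const (inner ℝ (f' x) d))).sub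
      ((hasDerivAt_pow 2 t).const_mul (L / 2 * ‖d‖ ^ 2))
    refine HasDerivAt.congr_deriv (f := φ) h1 ?_
    norm_num
    ring
  have hanti : AntitoneOn φ (Set.Ici 0) := by
    refine antitoneOn_of_deriv_nonpos (convex_Ici 0)
      (fun t _ => (hφ t).continuousAt.continuousWithinAt)
      (fun t _ => (hφ t).differentiableAt.differentiableWithinAt) ?_
    intro t ht
    rw [interior_Ici, Set.mem_Ioi] at ht
    rw [(hφ t).deriv, ← inner_sub_left]
    have h1 := real_inner_le_norm (f' (x + t • d) - f' x) d
    have h2 := hl (x + t • d) x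
    rw [add_sub_cancel_left, norm_smul, Real.norm_of_nonneg ht.le] at h2
    have h3 := mul_le_mul_of_nonneg_right h2 (norm_nonneg d)
    linarith
  have h := hanti (Set.mem_Ici.2 le_rfl) (Set.mem_Ici.2 zero_le_one) zero_le_one
  simp [φ, hd] at h
  linarith

/-- Quadratic growth of the prox objective away from its minimizer `p`. -/
theorem prox_growth {P : E → ℝ} (hP : ConvexOn ℝ Set.univ P) {L : ℝ} {p G : E}
    (hp : ∀ x, P p + L / 2 * ‖p - G‖ ^ 2 ≤ P x + L / 2 * ‖x - G‖ ^ 2) (z : E) :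
    P p + L / 2 * ‖p - G‖ ^ 2 + L / 2 * ‖z - p‖ ^ 2 ≤ P z + L / 2 * ‖z - G‖ ^ 2 := by
  -- minimality at `(1 - t) p + t z`, divided by `t`
  have key : ∀ t : ℝ, 0 < t → t < 1 →
      P p + L / 2 * ‖p - G‖ ^ 2 + (1 - t) * (L / 2 * ‖z - p‖ ^ 2) ≤
        P z + L / 2 * ‖z - G‖ ^ 2 := by
    intro t ht ht1
    have h1 := hp ((1 - t) • p + t • z)
    have h2 := hP.2 (Set.mem_univ p) (Set.mem_univ z) (sub_nonneg.2 ht1.le) ht.le (by ring)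
    have e1 : (1 - t) • p + t • z - G = (p - G) + t • (z - p) := by module
    have e2 : z - G = (p - G) + (z - p) := by abel
    have n1 : ‖(1 - t) • p + t • z - G‖ ^ 2 =
        ‖p - G‖ ^ 2 + 2 * (t * inner ℝ (p - G) (z - p)) + t ^ 2 * ‖z - p‖ ^ 2 := by
      rw [e1, norm_add_sq_real, inner_smul_right, norm_smul, mul_pow, Real.norm_eq_abs, sq_abs]
    have n2 : ‖z - G‖ ^ 2 =
        ‖p - G‖ ^ 2 + 2 * inner ℝ (p - G) (z - p) + ‖z - p‖ ^ 2 := by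
      rw [e2, norm_add_sq_real]
    rw [n1] at h1
    rw [n2]
    simp only [smul_eq_mul] at h2
    refine le_of_mul_le_mul_left ?_ ht
    linarith
  have hc : Filter.Tendsto
      (fun t : ℝ => P p + L / 2 * ‖p - G‖ ^ 2 + (1 - t) * (L / 2 * ‖z - p‖ ^ 2))
      (nhdsWithin 0 (Set.Ioi 0))
      (nhds (P p + L / 2 * ‖p - G‖ ^ 2 + (1 - 0) * (L / 2 * ‖z - p‖ ^ 2))) :=
    (Continuous.tendsto (by fun_prop) 0).mono_left nhdsWithin_le_nhds
  rw [sub_zero, one_mul] at hc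
  refine le_of_tendsto hc ?_
  filter_upwards [Ioo_mem_nhdsGT (zero_lt_one (α := ℝ))] with t ht
  exact key t ht.1 ht.2

/-- One proximal gradient step from `x` to `p`, compared with an arbitrary point `z`. -/
theorem prox_grad_step [CompleteSpace E] {f P : E → ℝ} {f' : E → E} {L : ℝ} (hL : 0 < L)
    (hc : ConvexOn ℝ Set.univ f) (hf : ∀ x, HasGradientAt f (f' x) x)
    (hl : ∀ x y, ‖f' x - f' y‖ ≤ L * ‖x - y‖) (hP : ConvexOn ℝ Set.univ P) {x p : E}
    (hp : ∀ w, P p + L / 2 * ‖p - (x - (1 / L) • f' x)‖ ^ 2 ≤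
      P w + L / 2 * ‖w - (x - (1 / L) • f' x)‖ ^ 2) (z : E) :
    P p + f p + L / 2 * ‖z - p‖ ^ 2 ≤ P z + f z + L / 2 * ‖z - x‖ ^ 2 := by
  have h1 := prox_growth hP hp z
  have h2 := convex_gradient_ineq hf hc x z
  have h3 := descent_ineq hf hl x p
  have e : ∀ w : E, L / 2 * ‖w - (x - (1 / L) • f' x)‖ ^ 2 =
      L / 2 * ‖w - x‖ ^ 2 + inner ℝ (f' x) (w - x) + L / 2 * ‖(1 / L) • f' x‖ ^ 2 := by
    intro w
    rw [← sub_add, norm_add_sq_real, inner_smul_right, real_inner_comm]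
    field_simp
  rw [e p, e z] at h1
  linarith

end ProximalGradient

/-- O(1/k) convergence of the proximal gradient method: if `f` is convex and
differentiable with `L_f`-Lipschitz gradient `f'`, `P` is convex,
`X*` minimizes `F = P + f`, and the iterates satisfy the proximal step
`X_{k+1} ∈ argmin_X P X + (L_f/2)‖X - (X_k - (1/L_f) f'(X_k))‖²`, then
`F(X_k) - F(X*) ≤ L_f ‖X₀ - X*‖² / (2k)` for every `k ≥ 1`. -/
theorem proximal_gradient_convergence_rate {n : ℕ}
    (f P : EuclideanSpace ℝ (Fin n) → ℝ)
    (f' : EuclideanSpace ℝ (Fin n) → EuclideanSpace ℝ (Fin n))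
    (Lf : ℝ) (hLf : 0 < Lf)
    (hfconv : ConvexOn ℝ Set.univ f)
    (hfgrad : ∀ x, HasGradientAt f (f' x) x)
    (hflip : ∀ x y, ‖f' x - f' y‖ ≤ Lf * ‖x - y‖)
    (hPconv : ConvexOn ℝ Set.univ P)
    (Xstar : EuclideanSpace ℝ (Fin n))
    (hXstar : ∀ x, P Xstar + f Xstar ≤ P x + f x)
    (X : ℕ → EuclideanSpace ℝ (Fin n))
    (hstep : ∀ k, ∀ x,
      P (X (k + 1)) + (Lf / 2) * ‖X (k + 1) - (X k - (1 / Lf) • f' (X k))‖ ^ 2 ≤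
        P x + (Lf / 2) * ‖x - (X k - (1 / Lf) • f' (X k))‖ ^ 2) :
    ∀ k : ℕ, 1 ≤ k →
      P (X k) + f (X k) - (P Xstar + f Xstar) ≤
        Lf * ‖X 0 - Xstar‖ ^ 2 / (2 * k) := by
  have step := fun k z => prox_grad_step hLf hfconv hfgrad hflip hPconv (hstep k) z
  have main : ∀ k : ℕ, (k : ℝ) * (P (X k) + f (X k) - (P Xstar + f Xstar)) +
      Lf / 2 * ‖Xstar - X k‖ ^ 2 ≤ Lf / 2 * ‖Xstar - X 0‖ ^ 2 := by
    intro k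
    induction k with
    | zero => simp
    | succ k ih =>
      have h1 := step k Xstar
      have h2 : P (X (k + 1)) + f (X (k + 1)) ≤ P (X k) + f (X k) := by
        have h := step k (X k)
        rw [sub_self, norm_zero] at h
        have : 0 ≤ Lf / 2 * ‖X k - X (k + 1)‖ ^ 2 := by positivity
        linarith
      have h3 := mul_le_mul_of_nonneg_left h2 (Nat.cast_nonneg (α := ℝ) k)
      push_cast
      linarith
  intro k hk
  have hk' : (0 : ℝ) < k := by exact_mod_cast hk
  have h := main k
  have hn : 0 ≤ Lf / 2 * ‖Xstar - X k‖ ^ 2 := by positivity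
  rw [le_div_iff₀ (by positivity), norm_sub_rev (X 0) Xstar]
  linarith
end
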